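/- Let N be a positive integer and δ₀ ∈ (0,1). There exists a constant c₀ > 0, depending only on N and δ₀, such that for all s, t with 0 < s < t < 1 and t − s ≥ δ₀, and every measurable set E ⊆ ℝ^N with |E| < ∞ and P_t(E) < ∞, one has F_{s,t}(E) ≥ (1−t)·P_t(E)/2 − c₀·|E|. -/

import Mathlib

open MeasureTheory ENNReal

/-- Interaction energy `∫_A ∫_B |x-y|^{-(N+α)} dy dx` in `[0,∞]`. -/
noncomputable def interEnergy (N : ℕ) (α : ℝ)
    (A B : Set (EuclideanSpace ℝ (Fin N))) : ℝ≥0∞ :=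
  ∫⁻ x in A, ∫⁻ y in B, ENNReal.ofReal (‖x - y‖ ^ (-((N : ℝ) + α))) ∂volume ∂volume

/-- The fractional `α`-perimeter `P_α(E) = ∫_E ∫_{Eᶜ} |x-y|^{-(N+α)} dy dx`. -/
noncomputable def fracPer (N : ℕ) (α : ℝ) (E : Set (EuclideanSpace ℝ (Fin N))) : ℝ≥0∞ :=
  interEnergy N α E Eᶜ

/-- The free energy `F_{s,t}(E) = (1-t) P_t(E) - s P_s(E)`. -/
noncomputable def freeEnergy (N : ℕ) (s t : ℝ) (E : Set (EuclideanSpace ℝ (Fin N))) : ℝ :=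
  (1 - t) * (fracPer N t E).toReal - s * (fracPer N s E).toReal

open Metric Module

/-!
Substituting `y = x + h` turns `P_α(E)` into `∫ g(h) |h|^{-(N + α)} dh`, where
`g(h) = |{x ∈ E : x + h ∉ E}|` is subadditive, so that `g(2h) ≤ 2 g(h)`. By scaling, the part of
`P_t(E)` coming from `|h| ≤ 2r` is at most `2^{1-t} ≤ 1 + (1 - t)` times the part from `|h| ≤ r`:
each dyadic annulus contributes at most `(1 - t) P_t(E)`. The weight `|h|^{t-s}` that converts the
`t`-kernel into the `s`-kernel makes these contributions to `P_s(E)` a geometric series, hence the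
part from `|h| ≤ R` is at most `R^{t-s} / (1 - 2^{-(t-s)}) · (1 - t) P_t(E)`. The part from
`|h| > R` is at most `|E| ∫_{|h| > R} |h|^{-(N + s)} dh`, which is of order `|E| R^{-s} / s`.
Choosing `R` small in terms of `δ₀` makes the first coefficient at most `1/2`, and multiplying by
`s` cancels the `1/s` in the second.
-/

section Translation

variable {G : Type*} [AddGroup G] [MeasurableSpace G] (μ : Measure G)

/-- The measure of the part of `E` that the translation `x ↦ x + h` moves out of `E`.
The fractional perimeters of `E` are integrals of this function against powers of `‖h‖`. -/
noncomputable def translationDefect (E : Set G) (h : G) : ℝ≥0∞ :=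
  μ (E ∩ (· + h) ⁻¹' Eᶜ)

theorem translationDefect_le (E : Set G) (h : G) : translationDefect μ E h ≤ μ E :=
  measure_mono Set.inter_subset_left

theorem translationDefect_add_le [MeasurableAdd G] [μ.IsAddRightInvariant] (E : Set G)
    (h k : G) :
    translationDefect μ E (h + k) ≤ translationDefect μ E h + translationDefect μ E k := by
  have hsub : E ∩ (· + (h + k)) ⁻¹' Eᶜ ⊆
      (E ∩ (· + h) ⁻¹' Eᶜ) ∪ (· + h) ⁻¹' (E ∩ (· + k) ⁻¹' Eᶜ) := by
    rintro x ⟨hx, hxhk⟩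
    by_cases hxh : x + h ∈ E
    · exact Or.inr ⟨hxh, by simpa [add_assoc] using hxhk⟩
    · exact Or.inl ⟨hx, hxh⟩
  calc translationDefect μ E (h + k)
      ≤ translationDefect μ E h + μ ((· + h) ⁻¹' (E ∩ (· + k) ⁻¹' Eᶜ)) :=
        (measure_mono hsub).trans (measure_union_le _ _)
    _ = translationDefect μ E h + translationDefect μ E k := by
        rw [measure_preimage_add_right, translationDefect, translationDefect]

variable [MeasurableAdd₂ G]

theorem measurable_translationDefect [SFinite μ] {E : Set G} (hE : MeasurableSet E) :
    Measurable (translationDefect μ E) :=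
  measurable_measure_prodMk_left (ν := μ)
    ((measurable_snd hE).inter ((measurable_snd.add measurable_fst) hE.compl))

theorem setLIntegral_setLIntegral_neg_add [SFinite μ] [μ.IsAddLeftInvariant] (A : Set G)
    {B : Set G} (hB : MeasurableSet B) {k : G → ℝ≥0∞} (hk : Measurable k) :
    ∫⁻ x in A, ∫⁻ y in B, k (-x + y) ∂μ ∂μ = ∫⁻ h, μ (A ∩ (· + h) ⁻¹' B) * k h ∂μ := by
  have hinner (x : G) : ∫⁻ y in B, k (-x + y) ∂μ = ∫⁻ h, B.indicator 1 (x + h) * k h ∂μ := by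
    rw [← lintegral_indicator hB, ← lintegral_add_left_eq_self _ x]
    congr with h
    by_cases hxh : x + h ∈ B <;> simp [hxh]
  have houter (h : G) :
      ∫⁻ x in A, B.indicator 1 (x + h) * k h ∂μ = μ (A ∩ (· + h) ⁻¹' B) * k h := by
    have hBh : MeasurableSet ((· + h) ⁻¹' B) := measurable_add_const h hB
    have hind (x : G) : B.indicator (1 : G → ℝ≥0∞) (x + h) = ((· + h) ⁻¹' B).indicator 1 x := rfl
    simp_rw [hind]
    rw [lintegral_mul_const _ (measurable_one.indicator hBh), lintegral_indicator_one hBh,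
      Measure.restrict_apply hBh, Set.inter_comm]
  have hmeas : Measurable (Function.uncurry fun x h : G ↦ B.indicator 1 (x + h) * k h) :=
    ((measurable_one.indicator hB).comp measurable_add).mul (hk.comp measurable_snd)
  simp_rw [hinner, lintegral_lintegral_swap hmeas.aemeasurable, houter]

end Translation

section DyadicAnnuli

variable {V : Type*} [SeminormedAddCommGroup V]

theorem closedBall_subset_iUnion_annuli {R : ℝ} (hR : 0 < R) :
    closedBall (0 : V) R ⊆ {h | ‖h‖ = 0} ∪
      ⋃ k : ℕ,
        closedBall 0 (2 * (R * (1 / 2) ^ (k + 1))) \ closedBall 0 (R * (1 / 2) ^ (k + 1)) := by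
  intro h hh
  rw [mem_closedBall_zero_iff] at hh
  rcases (norm_nonneg h).eq_or_lt with h0 | hpos
  · exact Or.inl h0.symm
  obtain ⟨k, hlower, hupper⟩ := exists_nat_pow_near_of_lt_one (x := ‖h‖ / R) (y := 1 / 2)
    (by positivity) ((div_le_one hR).2 hh) (by norm_num) (by norm_num)
  rw [lt_div_iff₀' hR] at hlower
  rw [div_le_iff₀' hR] at hupper
  refine Or.inr (Set.mem_iUnion.2 ⟨k, ?_, ?_⟩)
  · rw [mem_closedBall_zero_iff, pow_succ]
    linarith
  · rwa [mem_closedBall_zero_iff, not_le]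

variable [MeasurableSpace V] {ν : Measure V}

theorem setLIntegral_norm_rpow_le {δ ρ : ℝ} (hδ : 0 ≤ δ) {S : Set V} (hS : S ⊆ closedBall 0 ρ) :
    ∫⁻ h in S, ENNReal.ofReal (‖h‖ ^ δ) ∂ν ≤ ENNReal.ofReal (ρ ^ δ) * ν S := by
  rw [← setLIntegral_const]
  refine setLIntegral_mono measurable_const fun h hh ↦ ?_
  gcongr
  exact mem_closedBall_zero_iff.1 (hS hh)

theorem setLIntegral_closedBall_norm_rpow_le {M : ℝ≥0∞}
    (hν : ∀ r > 0, ν (closedBall 0 (2 * r) \ closedBall 0 r) ≤ M)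
    {R δ : ℝ} (hR : 0 < R) (hδ : 0 < δ) :
    ∫⁻ h in closedBall 0 R, ENNReal.ofReal (‖h‖ ^ δ) ∂ν ≤
      ENNReal.ofReal (R ^ δ / (1 - (1 / 2) ^ δ)) * M := by
  set annulus : ℕ → Set V := fun k ↦
    closedBall 0 (2 * (R * (1 / 2) ^ (k + 1))) \ closedBall 0 (R * (1 / 2) ^ (k + 1))
  have hratio : ((1 : ℝ) / 2) ^ δ < 1 := Real.rpow_lt_one (by norm_num) (by norm_num) hδ
  have hzero : ∫⁻ h in {h : V | ‖h‖ = 0}, ENNReal.ofReal (‖h‖ ^ δ) ∂ν = 0 := by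
    have hsub : {h : V | ‖h‖ = 0} ⊆ closedBall 0 0 := fun h hh ↦
      mem_closedBall_zero_iff.2 (le_of_eq hh)
    simpa [Real.zero_rpow hδ.ne'] using setLIntegral_norm_rpow_le hδ.le hsub (ν := ν)
  have hannulus (k : ℕ) : ∫⁻ h in annulus k, ENNReal.ofReal (‖h‖ ^ δ) ∂ν ≤
      ENNReal.ofReal (R ^ δ * ((1 / 2) ^ δ) ^ k) * M := by
    have hscale : (2 * (R * (1 / 2) ^ (k + 1))) ^ δ = R ^ δ * (((1 : ℝ) / 2) ^ δ) ^ k := by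
      have hradius : 2 * (R * (1 / 2) ^ (k + 1)) = R * (1 / 2) ^ k := by ring
      rw [hradius, Real.mul_rpow hR.le (by positivity), Real.rpow_pow_comm (by norm_num)]
    rw [← hscale]
    refine (setLIntegral_norm_rpow_le hδ.le Set.sdiff_subset).trans ?_
    gcongr
    exact hν _ (by positivity)
  calc ∫⁻ h in closedBall 0 R, ENNReal.ofReal (‖h‖ ^ δ) ∂ν
      ≤ ∫⁻ h in {h | ‖h‖ = 0} ∪ ⋃ k, annulus k, ENNReal.ofReal (‖h‖ ^ δ) ∂ν :=
        lintegral_mono_set (closedBall_subset_iUnion_annuli hR)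
    _ ≤ ∑' k, ∫⁻ h in annulus k, ENNReal.ofReal (‖h‖ ^ δ) ∂ν := by
        refine (lintegral_union_le _ _ _).trans ?_
        rw [hzero, zero_add]
        exact lintegral_iUnion_le _ _
    _ ≤ ∑' k : ℕ, ENNReal.ofReal (R ^ δ * ((1 / 2) ^ δ) ^ k) * M :=
        ENNReal.tsum_le_tsum hannulus
    _ = ENNReal.ofReal (R ^ δ / (1 - (1 / 2) ^ δ)) * M := by
        rw [ENNReal.tsum_mul_right, ← ENNReal.ofReal_tsum_of_nonneg (fun k ↦ by positivity)
          ((summable_geometric_of_lt_one (by positivity) hratio).mul_left _), tsum_mul_left,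
          tsum_geometric_of_lt_one (by positivity) hratio, ← div_eq_mul_inv]

end DyadicAnnuli

theorem exists_radius_rpow_div_le_half {δ₀ : ℝ} (hδ₀ : 0 < δ₀) :
    ∃ R : ℝ, 0 < R ∧ R ≤ 1 ∧ ∀ δ ≥ δ₀, R ^ δ / (1 - (1 / 2) ^ δ) ≤ 1 / 2 := by
  have hgap : 0 < 1 - ((1 : ℝ) / 2) ^ δ₀ :=
    sub_pos.2 (Real.rpow_lt_one (by norm_num) (by norm_num) hδ₀)
  have hgap' : 1 - ((1 : ℝ) / 2) ^ δ₀ ≤ 1 := sub_le_self 1 (by positivity)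
  set R : ℝ := ((1 - (1 / 2) ^ δ₀) / 2) ^ δ₀⁻¹
  have hR : 0 < R := by positivity
  have hR₁ : R ≤ 1 := Real.rpow_le_one (by positivity) (by linarith) (by positivity)
  refine ⟨R, hR, hR₁, fun δ hδ ↦ ?_⟩
  calc R ^ δ / (1 - (1 / 2) ^ δ) ≤ R ^ δ₀ / (1 - (1 / 2) ^ δ₀) :=
        div_le_div₀ (by positivity) (Real.rpow_le_rpow_of_exponent_ge hR hR₁ hδ) hgap
          (sub_le_sub_left
            (Real.rpow_le_rpow_of_exponent_ge (by norm_num) (by norm_num) hδ) 1)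
    _ = 1 / 2 := by
        rw [Real.rpow_inv_rpow (by positivity) hδ₀.ne']
        field_simp

section Haar

variable {V : Type*} [NormedAddCommGroup V] [NormedSpace ℝ V]

/-- The kernel `|h|^{-(d + α)}` of the fractional `α`-perimeter in dimension `d = finrank ℝ V`.
Its value at `h = 0` is `0` unless `d + α = 0`. -/
noncomputable def fractionalKernel (α : ℝ) (h : V) : ℝ≥0∞ :=
  ENNReal.ofReal (‖h‖ ^ (-(finrank ℝ V + α)))

theorem fractionalKernel_smul (α c : ℝ) (h : V) :
    fractionalKernel α (c • h) =
      ENNReal.ofReal (|c| ^ (-(finrank ℝ V + α))) * fractionalKernel α h := by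
  rw [fractionalKernel, fractionalKernel, ← ENNReal.ofReal_mul (by positivity), norm_smul,
    Real.norm_eq_abs, Real.mul_rpow (abs_nonneg c) (norm_nonneg h)]

theorem fractionalKernel_eq_mul {s : ℝ} (hs : 0 < s) (t : ℝ) (h : V) :
    fractionalKernel s h = fractionalKernel t h * ENNReal.ofReal (‖h‖ ^ (t - s)) := by
  have hexp : -(finrank ℝ V + s) = -(finrank ℝ V + t) + (t - s) := by ring
  have hne : -(finrank ℝ V + t) + (t - s) ≠ 0 := by
    rw [← hexp]
    exact neg_ne_zero.2 (by positivity)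
  rw [fractionalKernel, fractionalKernel, ← ENNReal.ofReal_mul (by positivity), hexp,
    Real.rpow_add' (norm_nonneg h) hne]

variable [MeasurableSpace V]

theorem measurable_fractionalKernel [OpensMeasurableSpace V] (α : ℝ) :
    Measurable (fractionalKernel (V := V) α) := by
  unfold fractionalKernel
  fun_prop

variable (μ : Measure V)

/-- The fractional `α`-perimeter `∫_E ∫_{Eᶜ} |x - y|^{-(d + α)} dμ(y) dμ(x)` of a set in a normed
space of dimension `d`; `fracPer` is the case of Lebesgue measure on Euclidean space. -/
noncomputable def fractionalPerimeter (α : ℝ) (E : Set V) : ℝ≥0∞ :=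
  ∫⁻ x in E, ∫⁻ y in Eᶜ, fractionalKernel α (x - y) ∂μ ∂μ

/-- The distribution of the displacement `h = y - x` under the double integral defining the
fractional `α`-perimeter of `E`, with `x ∈ E` integrated out:
a measure of total mass `P_α(E)` on which the contributions of small and large `h` are separated
by restriction to balls. -/
noncomputable def displacementMeasure (α : ℝ) (E : Set V) : Measure V :=
  μ.withDensity fun h ↦ translationDefect μ E h * fractionalKernel α h

theorem displacementMeasure_eq_withDensity [OpensMeasurableSpace V] [MeasurableAdd₂ V] [SFinite μ]
    {E : Set V} (hE : MeasurableSet E) {s : ℝ} (hs : 0 < s) (t : ℝ) :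
    displacementMeasure μ s E =
      (displacementMeasure μ t E).withDensity fun h ↦ ENNReal.ofReal (‖h‖ ^ (t - s)) := by
  have hmeas : Measurable fun h ↦ translationDefect μ E h * fractionalKernel t h :=
    (measurable_translationDefect μ hE).mul (measurable_fractionalKernel t)
  rw [displacementMeasure, displacementMeasure, ← withDensity_mul _ hmeas (by fun_prop)]
  congr with h
  rw [Pi.mul_apply, fractionalKernel_eq_mul hs t h, mul_assoc]

variable [BorelSpace V] [FiniteDimensional ℝ V] [μ.IsAddHaarMeasure] {E : Set V}

theorem displacementMeasure_univ (hE : MeasurableSet E) (α : ℝ) :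
    displacementMeasure μ α E Set.univ = fractionalPerimeter μ α E := by
  have hkernel (x y : V) : fractionalKernel α (x - y) = fractionalKernel α (-x + y) := by
    rw [fractionalKernel, fractionalKernel, norm_sub_rev, neg_add_eq_sub]
  simp_rw [fractionalPerimeter, hkernel]
  rw [setLIntegral_setLIntegral_neg_add μ E hE.compl (measurable_fractionalKernel α),
    displacementMeasure, withDensity_apply _ .univ, Measure.restrict_univ]
  rfl

theorem setLIntegral_eq_setLIntegral_comp_smul {f : V → ℝ≥0∞} (hf : Measurable f) {S : Set V}
    (hS : MeasurableSet S) {c : ℝ} (hc : c ≠ 0) :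
    ∫⁻ h in S, f h ∂μ =
      ENNReal.ofReal (|c| ^ finrank ℝ V) * ∫⁻ h in (c • ·) ⁻¹' S, f (c • h) ∂μ := by
  have hcancel : ENNReal.ofReal (|c| ^ finrank ℝ V) *
      ENNReal.ofReal |(c ^ finrank ℝ V)⁻¹| = 1 := by
    rw [← ENNReal.ofReal_mul (by positivity), abs_inv, abs_pow,
      mul_inv_cancel₀ (by positivity), ENNReal.ofReal_one]
  rw [← setLIntegral_map hS hf (measurable_const_smul c), Measure.map_addHaar_smul μ hc,
    Measure.restrict_smul, lintegral_smul_measure, smul_eq_mul, ← mul_assoc, hcancel, one_mul]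

theorem displacementMeasure_closedBall_two_mul_le (hE : MeasurableSet E) (α r : ℝ) :
    displacementMeasure μ α E (closedBall 0 (2 * r)) ≤
      ENNReal.ofReal (2 ^ (1 - α)) * displacementMeasure μ α E (closedBall 0 r) := by
  have hmeas : Measurable fun h ↦ translationDefect μ E h * fractionalKernel α h :=
    (measurable_translationDefect μ hE).mul (measurable_fractionalKernel α)
  have hball : ((2 : ℝ) • ·) ⁻¹' closedBall (0 : V) (2 * r) = closedBall 0 r := by
    ext h
    simp [norm_smul]
  have hdefect (h : V) : translationDefect μ E ((2 : ℝ) • h) ≤ 2 * translationDefect μ E h := by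
    simpa only [two_smul, two_mul] using translationDefect_add_le μ E h h
  have hconst : ENNReal.ofReal (|2| ^ finrank ℝ V) *
      (2 * ENNReal.ofReal (|2| ^ (-(finrank ℝ V + α)))) = ENNReal.ofReal (2 ^ (1 - α)) := by
    have hexp : 1 - α = finrank ℝ V + (1 + -(finrank ℝ V + α)) := by ring
    rw [abs_two, hexp, Real.rpow_add two_pos, Real.rpow_add two_pos, Real.rpow_natCast,
      Real.rpow_one, ENNReal.ofReal_mul (by positivity), ENNReal.ofReal_mul (by positivity),
      ENNReal.ofReal_ofNat]
  rw [displacementMeasure, withDensity_apply _ measurableSet_closedBall,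
    withDensity_apply _ measurableSet_closedBall,
    setLIntegral_eq_setLIntegral_comp_smul μ hmeas measurableSet_closedBall two_ne_zero, hball,
    ← hconst, mul_assoc, ← lintegral_const_mul _ hmeas]
  refine mul_le_mul_right (lintegral_mono fun h ↦ ?_) _
  calc translationDefect μ E ((2 : ℝ) • h) * fractionalKernel α ((2 : ℝ) • h)
      ≤ 2 * translationDefect μ E h * fractionalKernel α ((2 : ℝ) • h) := by
        gcongr
        exact hdefect h
    _ = 2 * ENNReal.ofReal (|2| ^ (-(finrank ℝ V + α))) *
          (translationDefect μ E h * fractionalKernel α h) := by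
        rw [fractionalKernel_smul]
        ring

theorem displacementMeasure_annulus_le (hE : MeasurableSet E) {α : ℝ} (hα₀ : 0 ≤ α) (hα₁ : α ≤ 1)
    (hP : fractionalPerimeter μ α E < ⊤) {r : ℝ} (hr : 0 ≤ r) :
    displacementMeasure μ α E (closedBall 0 (2 * r) \ closedBall 0 r) ≤
      ENNReal.ofReal (1 - α) * fractionalPerimeter μ α E := by
  set ν := displacementMeasure μ α E
  have hle : ν (closedBall 0 r) ≤ fractionalPerimeter μ α E :=
    (measure_mono (Set.subset_univ _)).trans_eq (displacementMeasure_univ μ hE α)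
  have hbernoulli : (2 : ℝ) ^ (1 - α) ≤ 1 + (1 - α) := by
    simpa [one_add_one_eq_two] using rpow_one_add_le_one_add_mul_self (s := 1) (by norm_num)
      (sub_nonneg.2 hα₁) (sub_le_self 1 hα₀)
  rw [measure_sdiff (closedBall_subset_closedBall (by linarith))
    measurableSet_closedBall.nullMeasurableSet (hle.trans_lt hP).ne, tsub_le_iff_left]
  calc ν (closedBall 0 (2 * r))
      ≤ ENNReal.ofReal (2 ^ (1 - α)) * ν (closedBall 0 r) :=
        displacementMeasure_closedBall_two_mul_le μ hE α r
    _ ≤ ENNReal.ofReal (1 + (1 - α)) * ν (closedBall 0 r) := by gcongr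
    _ = ν (closedBall 0 r) + ENNReal.ofReal (1 - α) * ν (closedBall 0 r) := by
        rw [ENNReal.ofReal_add zero_le_one (sub_nonneg.2 hα₁), ENNReal.ofReal_one, add_mul, one_mul]
    _ ≤ ν (closedBall 0 r) + ENNReal.ofReal (1 - α) * fractionalPerimeter μ α E := by gcongr

theorem displacementMeasure_closedBall_le (hE : MeasurableSet E) {s t : ℝ} (hs : 0 < s)
    (hst : s < t) (ht : t ≤ 1) (hP : fractionalPerimeter μ t E < ⊤) {R : ℝ} (hR : 0 < R) :
    displacementMeasure μ s E (closedBall 0 R) ≤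
      ENNReal.ofReal (R ^ (t - s) / (1 - (1 / 2) ^ (t - s))) *
        (ENNReal.ofReal (1 - t) * fractionalPerimeter μ t E) := by
  rw [displacementMeasure_eq_withDensity μ hE hs t, withDensity_apply _ measurableSet_closedBall]
  exact setLIntegral_closedBall_norm_rpow_le
    (fun r hr ↦ displacementMeasure_annulus_le μ hE (hs.trans hst).le ht hP hr.le)
    hR (sub_pos.2 hst)

variable [Nontrivial V]

theorem setLIntegral_compl_closedBall_fractionalKernel {s R : ℝ} (hs : 0 < s) (hR : 0 < R) :
    ∫⁻ h in (closedBall 0 R)ᶜ, fractionalKernel s h ∂μ =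
      ENNReal.ofReal (finrank ℝ V * μ.real (ball 0 1) * (R ^ (-s) / s)) := by
  set profile : ℝ → ℝ := (Set.Ioi R).indicator fun y ↦ y ^ (-(finrank ℝ V + s))
  have hradial : Set.EqOn (fun y : ℝ ↦ y ^ (finrank ℝ V - 1) • profile y)
      ((Set.Ioi R).indicator fun y ↦ y ^ (-s - 1)) (Set.Ioi 0) := by
    intro y (hy : 0 < y)
    by_cases hRy : y ∈ Set.Ioi R
    · simp only [profile, Set.indicator_of_mem hRy, smul_eq_mul]
      rw [← Real.rpow_natCast, ← Real.rpow_add hy, Nat.cast_pred finrank_pos]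
      ring_nf
    · simp [profile, hRy]
  have hinter : Set.Ioi 0 ∩ Set.Ioi R = Set.Ioi R :=
    Set.inter_eq_right.2 (Set.Ioi_subset_Ioi hR.le)
  have hint : Integrable (fun h : V ↦ profile ‖h‖) μ := by
    rw [integrable_fun_norm_addHaar, integrableOn_congr_fun hradial measurableSet_Ioi, IntegrableOn,
      integrable_indicator_iff measurableSet_Ioi, IntegrableOn,
      Measure.restrict_restrict measurableSet_Ioi, Set.inter_comm, hinter]
    exact integrableOn_Ioi_rpow_of_lt (by linarith) hR
  have hprofile (h : V) : ENNReal.ofReal (profile ‖h‖) =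
      (closedBall 0 R)ᶜ.indicator (fractionalKernel s) h := by
    by_cases hh : R < ‖h‖ <;> simp [profile, fractionalKernel, hh, Set.indicator]
  have hnonneg (h : V) : 0 ≤ profile ‖h‖ :=
    Set.indicator_nonneg (fun y hy ↦ Real.rpow_nonneg (hR.trans hy).le _) _
  rw [← lintegral_indicator measurableSet_closedBall.compl, ← lintegral_congr hprofile,
    ← ofReal_integral_eq_lintegral_ofReal hint (ae_of_all _ hnonneg), integral_fun_norm_addHaar,
    setIntegral_congr_fun measurableSet_Ioi hradial, setIntegral_indicator measurableSet_Ioi,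
    hinter, integral_Ioi_rpow_of_lt (by linarith) hR, sub_add_cancel, neg_div_neg_eq, nsmul_eq_mul,
    smul_eq_mul, mul_assoc]

theorem displacementMeasure_compl_closedBall_le {s R : ℝ} (hs : 0 < s) (hR : 0 < R) (E : Set V) :
    displacementMeasure μ s E (closedBall 0 R)ᶜ ≤
      μ E * ENNReal.ofReal (finrank ℝ V * μ.real (ball 0 1) * (R ^ (-s) / s)) := by
  rw [displacementMeasure, withDensity_apply _ measurableSet_closedBall.compl,
    ← setLIntegral_compl_closedBall_fractionalKernel μ hs hR,
    ← lintegral_const_mul _ (measurable_fractionalKernel s)]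
  gcongr with h
  exact translationDefect_le μ E h

theorem fractionalPerimeter_le_add (hE : MeasurableSet E) {s t : ℝ} (hs : 0 < s)
    (hst : s < t) (ht : t ≤ 1) (hP : fractionalPerimeter μ t E < ⊤) {R : ℝ} (hR : 0 < R) :
    fractionalPerimeter μ s E ≤
      ENNReal.ofReal (R ^ (t - s) / (1 - (1 / 2) ^ (t - s))) *
          (ENNReal.ofReal (1 - t) * fractionalPerimeter μ t E) +
        μ E * ENNReal.ofReal (finrank ℝ V * μ.real (ball 0 1) * (R ^ (-s) / s)) := by
  rw [← displacementMeasure_univ μ hE s, ← measure_add_measure_compl measurableSet_closedBall]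
  exact add_le_add (displacementMeasure_closedBall_le μ hE hs hst ht hP hR)
    (displacementMeasure_compl_closedBall_le μ hs hR E)

theorem mul_toReal_fractionalPerimeter_le (hE : MeasurableSet E) (hμE : μ E < ⊤) {s t : ℝ}
    (hs : 0 < s) (hst : s < t) (ht : t ≤ 1) (hP : fractionalPerimeter μ t E < ⊤)
    {R : ℝ} (hR : 0 < R) :
    s * (fractionalPerimeter μ s E).toReal ≤
      s * (R ^ (t - s) / (1 - (1 / 2) ^ (t - s))) *
          ((1 - t) * (fractionalPerimeter μ t E).toReal) +
        finrank ℝ V * μ.real (ball 0 1) * R ^ (-s) * (μ E).toReal := by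
  have hratio : ((1 : ℝ) / 2) ^ (t - s) ≤ 1 :=
    Real.rpow_le_one (by norm_num) (by norm_num) (sub_pos.2 hst).le
  have hcoeff : 0 ≤ R ^ (t - s) / (1 - (1 / 2) ^ (t - s)) :=
    div_nonneg (by positivity) (sub_nonneg.2 hratio)
  have hnear : ENNReal.ofReal (R ^ (t - s) / (1 - (1 / 2) ^ (t - s))) *
      (ENNReal.ofReal (1 - t) * fractionalPerimeter μ t E) ≠ ⊤ := by finiteness
  have hfar : μ E * ENNReal.ofReal (finrank ℝ V * μ.real (ball 0 1) * (R ^ (-s) / s)) ≠ ⊤ := by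
    finiteness
  have hle := ENNReal.toReal_mono (ENNReal.add_ne_top.2 ⟨hnear, hfar⟩)
    (fractionalPerimeter_le_add μ hE hs hst ht hP hR)
  rw [ENNReal.toReal_add hnear hfar, ENNReal.toReal_mul, ENNReal.toReal_mul, ENNReal.toReal_mul,
    ENNReal.toReal_ofReal hcoeff, ENNReal.toReal_ofReal (sub_nonneg.2 ht),
    ENNReal.toReal_ofReal (by positivity)] at hle
  refine (mul_le_mul_of_nonneg_left hle hs.le).trans_eq ?_
  field_simp

theorem stmt4_general {δ₀ : ℝ} (hδ₀ : 0 < δ₀) :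
    ∃ c₀ : ℝ, 0 < c₀ ∧ ∀ s t : ℝ, 0 < s → t < 1 → δ₀ ≤ t - s →
      ∀ E : Set V, MeasurableSet E → μ E < ⊤ → fractionalPerimeter μ t E < ⊤ →
        (1 - t) * (fractionalPerimeter μ t E).toReal / 2 - c₀ * (μ E).toReal ≤
          (1 - t) * (fractionalPerimeter μ t E).toReal -
            s * (fractionalPerimeter μ s E).toReal := by
  obtain ⟨R, hR, hR₁, hhalf⟩ := exists_radius_rpow_div_le_half hδ₀
  have hdim : 0 < finrank ℝ V := finrank_pos
  have hunit : 0 < μ.real (ball 0 1) :=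
    ENNReal.toReal_pos (measure_ball_pos μ 0 one_pos).ne' measure_ball_lt_top.ne
  refine ⟨finrank ℝ V * μ.real (ball 0 1) * R⁻¹, by positivity, ?_⟩
  intro s t hs ht hts E hE hμE hP
  have hinterp := mul_toReal_fractionalPerimeter_le μ hE hμE hs (by linarith) ht.le hP hR
  have hcoeff : s * (R ^ (t - s) / (1 - (1 / 2) ^ (t - s))) ≤ 1 / 2 := by
    linarith [mul_le_mul_of_nonneg_left (hhalf (t - s) hts) hs.le]
  have hradius : R ^ (-s) ≤ R⁻¹ := by
    rw [← Real.rpow_neg_one]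
    exact Real.rpow_le_rpow_of_exponent_ge hR hR₁ (by linarith)
  have hnear := mul_le_mul_of_nonneg_right hcoeff
    (mul_nonneg (sub_nonneg.2 ht.le) (fractionalPerimeter μ t E).toReal_nonneg)
  have hfar : finrank ℝ V * μ.real (ball 0 1) * R ^ (-s) * (μ E).toReal ≤
      finrank ℝ V * μ.real (ball 0 1) * R⁻¹ * (μ E).toReal := by gcongr
  linarith

end Haar

theorem fracPer_eq_fractionalPerimeter (N : ℕ) (α : ℝ) (E : Set (EuclideanSpace ℝ (Fin N))) :
    fracPer N α E = fractionalPerimeter volume α E := by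
  simp only [fracPer, interEnergy, fractionalPerimeter, fractionalKernel,
    finrank_euclideanSpace_fin]

theorem stmt4 (N : ℕ) (hN : 0 < N) (δ₀ : ℝ) (hδ : δ₀ ∈ Set.Ioo (0 : ℝ) 1) :
    ∃ c₀ : ℝ, 0 < c₀ ∧ ∀ s t : ℝ, 0 < s → s < t → t < 1 → δ₀ ≤ t - s →
      ∀ E : Set (EuclideanSpace ℝ (Fin N)), MeasurableSet E →
        volume E < ⊤ → fracPer N t E < ⊤ →
        (1 - t) * (fracPer N t E).toReal / 2 - c₀ * (volume E).toReal ≤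
          freeEnergy N s t E := by
  have : Nonempty (Fin N) := ⟨⟨0, hN⟩⟩
  obtain ⟨c₀, hc₀, hbound⟩ :=
    stmt4_general (volume : Measure (EuclideanSpace ℝ (Fin N))) hδ.1
  simp only [freeEnergy, fracPer_eq_fractionalPerimeter]
  exact ⟨c₀, hc₀, fun s t hs _ ↦ hbound s t hs⟩
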